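/- Let Γ = (V, T, s, r) be a network. If there exists t ∈ T with |s(t)| > 1, then Q_Γ is not congruence-free and S_Γ is not congruence-free (each has a semigroup congruence other than the identity and the universal congruence). -/

import Mathlib

/-!
If `|s(t)| > 1` and `v ∈ s(t)`, the path `v t` is not linear. Declaring all non-linear paths to be
zero turns `Q_Γ` into the inverse semigroup of the directed graph with vertex set `T⁰` and edge set
`T`. The kernel of this homomorphism is neither the identity (it identifies `vtt⁻¹` with `0`) nor
universal (it separates `tt⁻¹` from `0`), and both `vtt⁻¹` and `tt⁻¹` lie in `S_Γ`, so the same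
kernel works for `S_Γ`.

Two facts about the presentation are needed: `vtt⁻¹ ≠ 0` in `Q_Γ`, and that the homomorphism is
well defined with `tt⁻¹` not sent to `0`. Both come from one construction: for a relation `R` on
sets with `R A B → A ∩ B ≠ ∅`, the generators act on words of path symbols (the empty word being
zero), where distinct sets `A`, `B` may be juxtaposed exactly when `R A B` (`act_rel`, `rep`). Taking
`R` to be "the sets meet" shows `vtt⁻¹ ≠ 0` (`videm_ne_zero`); taking `R` to be false gives the
graph semigroup (`linRep`).

That `S_Γ` is a subsemigroup follows from the stronger fact that it is a left ideal (`inS_mul`),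
which is checked one generator at a time. The bookkeeping is lightened by first dropping the
condition that paths be reduced (`mem_Sset_iff`), since every path can be reduced without changing
its class or its range (`exists_reduced`).
-/


namespace NetworkSemigroup

/-- A network: vertices `V`, relations `T`, with source and range maps assigning to each
relation disjoint nonempty subsets of `V`. -/
structure Network (V T : Type) where
  s : T → Set V
  r : T → Set V
  s_nonempty : ∀ t, (s t).Nonempty
  r_nonempty : ∀ t, (r t).Nonempty
  disj : ∀ t, s t ∩ r t = ∅

variable {V T : Type}

/-- Membership in `T⁰`: sources and ranges of relations, together with singletons of vertices. -/
def Network.InT0 (N : Network V T) (A : Set V) : Prop :=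
  (∃ t, A = N.s t) ∨ (∃ t, A = N.r t) ∨ (∃ v : V, A = {v})

/-- The set `T⁰` as a type. -/
def Network.T0 (N : Network V T) : Type := { A : Set V // N.InT0 A }

/-- The generating set `X = T ∪ T⁰ ∪ T⁻¹ ∪ {0}` of the presentation of `Q_Γ`. -/
inductive Gen (N : Network V T) : Type
  | pos : T → Gen N
  | neg : T → Gen N
  | ver : N.T0 → Gen N
  | zero : Gen N

namespace Gen

variable {N : Network V T}

/-- The source (as a set of vertices) of a generator. -/
def srcSet : Gen N → Set V
  | .pos t => N.s t
  | .neg t => N.r t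
  | .ver A => A.1
  | .zero => ∅

/-- The range (as a set of vertices) of a generator. -/
def rngSet : Gen N → Set V
  | .pos t => N.r t
  | .neg t => N.s t
  | .ver A => A.1
  | .zero => ∅

/-- The source of a generator, as the corresponding element of `T⁰`. -/
def srcGen : Gen N → Gen N
  | .pos t => .ver ⟨N.s t, Or.inl ⟨t, rfl⟩⟩
  | .neg t => .ver ⟨N.r t, Or.inr (Or.inl ⟨t, rfl⟩)⟩
  | .ver A => .ver A
  | .zero => .zero

/-- The range of a generator, as the corresponding element of `T⁰`. -/
def rngGen : Gen N → Gen N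
  | .pos t => .ver ⟨N.r t, Or.inr (Or.inl ⟨t, rfl⟩)⟩
  | .neg t => .ver ⟨N.s t, Or.inl ⟨t, rfl⟩⟩
  | .ver A => .ver A
  | .zero => .zero

end Gen

open FreeSemigroup

/-- The defining relations (NR1)–(NR6) of the presentation of `Q_Γ`, as a binary relation on
the free semigroup over the generators. -/
inductive NRel (N : Network V T) : FreeSemigroup (Gen N) → FreeSemigroup (Gen N) → Prop
  | nr1l (g : Gen N) (hg : g ≠ .zero) : NRel N (of g.srcGen * of g) (of g)
  | nr1r (g : Gen N) (hg : g ≠ .zero) : NRel N (of g * of g.rngGen) (of g)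
  | nr2 (g₁ g₂ : Gen N) (h₁ : g₁ ≠ .zero) (h₂ : g₂ ≠ .zero)
      (h : g₁.rngSet ∩ g₂.srcSet = ∅) : NRel N (of g₁ * of g₂) (of .zero)
  | nr3 (t₁ t₂ : T) (h : t₁ ≠ t₂) :
      NRel N (of (.neg t₁) * of (.pos t₂)) (of .zero)
  | nr4 (t : T) :
      NRel N (of (.neg t) * of (.pos t)) (of (.ver ⟨N.r t, Or.inr (Or.inl ⟨t, rfl⟩)⟩))
  | nr5 (t : T) (A : N.T0) (h : A.1 ≠ N.s t) :
      NRel N (of (.neg t) * of (.ver A)) (of .zero)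
  | nr6l (x : Gen N) : NRel N (of .zero * of x) (of .zero)
  | nr6r (x : Gen N) : NRel N (of x * of .zero) (of .zero)

/-- The congruence on the free semigroup generated by the defining relations. -/
def QCon (N : Network V T) : Con (FreeSemigroup (Gen N)) := conGen (NRel N)

/-- The semigroup `Q_Γ` given by the presentation `⟨X : R⟩`. -/
abbrev QGamma (N : Network V T) : Type := (QCon N).Quotient

/-- The congruence class of a word. -/
def Qofw {N : Network V T} (w : FreeSemigroup (Gen N)) : QGamma N := (w : (QCon N).Quotient)

/-- The zero element `[0]` of `Q_Γ`. -/
def Qzero (N : Network V T) : QGamma N := Qofw (of .zero)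

/-- Path symbols: elements of `T ∪ T⁰`. -/
def PSym (N : Network V T) : Type := T ⊕ N.T0

namespace PSym

variable {N : Network V T}

/-- The source of a path symbol. -/
def src : PSym N → Set V
  | Sum.inl t => N.s t
  | Sum.inr A => A.1

/-- The range of a path symbol. -/
def rng : PSym N → Set V
  | Sum.inl t => N.r t
  | Sum.inr A => A.1

/-- The generator corresponding to a path symbol. -/
def toGen : PSym N → Gen N
  | Sum.inl t => Gen.pos t
  | Sum.inr A => Gen.ver A

/-- The generator corresponding to the inverse of a path symbol (`t ↦ t⁻¹`, `A ↦ A`). -/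
def toInvGen : PSym N → Gen N
  | Sum.inl t => Gen.neg t
  | Sum.inr A => Gen.ver A

/-- The path symbol is the element of `T⁰` given by the set `B`. -/
def IsVerOf : PSym N → Set V → Prop
  | Sum.inl _, _ => False
  | Sum.inr A, B => A.1 = B

end PSym

/-- `L` is a path: a nonempty sequence of elements of `T ∪ T⁰` in which the range of each
symbol meets the source of the next one. -/
def IsPath (N : Network V T) (L : List (PSym N)) : Prop :=
  L ≠ [] ∧ ∀ (i : ℕ) (a b : PSym N), L[i]? = some a → L[i + 1]? = some b →
    (a.rng ∩ b.src).Nonempty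

/-- `L` is linear: the range of each symbol equals the source of the next one. -/
def IsLinear (N : Network V T) (L : List (PSym N)) : Prop :=
  ∀ (i : ℕ) (a b : PSym N), L[i]? = some a → L[i + 1]? = some b → a.rng = b.src

/-- `L = t₁⋯tₙ` is reduced: `t_{n-1} ≠ s(tₙ)` and, for `1 < i < n`,
`t_{i-1} ≠ s(tᵢ)` and `t_{i+1} ≠ r(tᵢ)`. -/
def IsReducedPath (N : Network V T) (L : List (PSym N)) : Prop :=
  (∀ (i : ℕ) (a b : PSym N), L[i]? = some a → L[i + 1]? = some b →
      i + 2 = L.length → ¬ a.IsVerOf b.src) ∧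
  (∀ (i : ℕ) (a b c : PSym N), L[i]? = some a → L[i + 1]? = some b → L[i + 2]? = some c →
      ¬ a.IsVerOf b.src ∧ ¬ c.IsVerOf b.rng)

/-- `RP(Γ)`: reduced paths. -/
def RP (N : Network V T) : Set (List (PSym N)) :=
  { L | IsPath N L ∧ IsReducedPath N L }

/-- `RLP(Γ)`: reduced linear paths. -/
def RLP (N : Network V T) : Set (List (PSym N)) :=
  { L | IsPath N L ∧ IsLinear N L ∧ IsReducedPath N L }

/-- The source `s(α)` of a path. -/
def pathSrc (N : Network V T) (L : List (PSym N)) : Set V :=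
  match L.head? with
  | some a => a.src
  | none => ∅

/-- The range `r(α)` of a path. -/
def pathRng (N : Network V T) (L : List (PSym N)) : Set V :=
  match L.getLast? with
  | some a => a.rng
  | none => ∅

/-- The path is a single symbol from `T⁰` (an "empty path"). -/
def InT0Path (N : Network V T) (L : List (PSym N)) : Prop :=
  ∃ A : N.T0, L = [Sum.inr A]

/-- The word of the free semigroup determined by a nonempty list of generators
(by convention the empty list is sent to the word `0`). -/
def genWord {N : Network V T} : List (Gen N) → FreeSemigroup (Gen N)
  | [] => of .zero
  | a :: M => ⟨a, M⟩

/-- The word `α` of a path `α`. -/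
def word {N : Network V T} (L : List (PSym N)) : FreeSemigroup (Gen N) :=
  genWord (L.map PSym.toGen)

/-- The word `α⁻¹ = tₙ⁻¹⋯t₁⁻¹` of a path `α = t₁⋯tₙ`. -/
def invWord {N : Network V T} (L : List (PSym N)) : FreeSemigroup (Gen N) :=
  genWord (L.reverse.map PSym.toInvGen)

/-- `αβ⁻¹` is in right normal form: `α ∈ RP(Γ)`, `β ∈ RLP(Γ)` and `r(α) = r(β)`. -/
def IsRNF (N : Network V T) (α β : List (PSym N)) : Prop :=
  α ∈ RP N ∧ β ∈ RLP N ∧ pathRng N α = pathRng N β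

/-- The element `[αβ⁻¹]` of `Q_Γ`. -/
def Qrnf (N : Network V T) (α β : List (PSym N)) : QGamma N :=
  Qofw (word α * invWord β)

/-- The relation `L*`: `a L* b` iff for all `x, y ∈ S¹`, `ax = ay ⇔ bx = by`. -/
def LStar {S : Type*} [Semigroup S] (a b : S) : Prop :=
  ∀ x y : WithOne S,
    (a : WithOne S) * x = (a : WithOne S) * y ↔ (b : WithOne S) * x = (b : WithOne S) * y

/-- The relation `R*`: `a R* b` iff for all `x, y ∈ S¹`, `xa = ya ⇔ xb = yb`. -/
def RStar {S : Type*} [Semigroup S] (a b : S) : Prop :=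
  ∀ x y : WithOne S,
    x * (a : WithOne S) = y * (a : WithOne S) ↔ x * (b : WithOne S) = y * (b : WithOne S)

/-- Green's relation `R`: `a R b` iff `aS¹ = bS¹`. -/
def GreenR {S : Type*} [Semigroup S] (a b : S) : Prop :=
  (∃ x : WithOne S, (a : WithOne S) * x = b) ∧ ∃ y : WithOne S, (b : WithOne S) * y = a

/-- Green's relation `L`: `a L b` iff `S¹a = S¹b`. -/
def GreenL {S : Type*} [Semigroup S] (a b : S) : Prop :=
  (∃ x : WithOne S, x * (a : WithOne S) = b) ∧ ∃ y : WithOne S, y * (b : WithOne S) = a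

/-- Green's relation `H = L ∩ R`. -/
def GreenH {S : Type*} [Semigroup S] (a b : S) : Prop :=
  GreenL a b ∧ GreenR a b


/-- The underlying set of the subsemigroup
`S_Γ = {[αβ⁻¹] : α ∈ RP(Γ), β ∈ RLP(Γ)∖T⁰, r(α) = r(β)} ∪ {[0]}` of `Q_Γ`. -/
def Sset (N : Network V T) : Set (QGamma N) :=
  { q | ∃ α β : List (PSym N), α ∈ RP N ∧ β ∈ RLP N ∧ ¬ InT0Path N β ∧
      pathRng N α = pathRng N β ∧ q = Qrnf N α β } ∪ {Qzero N}

/-! ### Two representations by functions on words of path symbols -/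

section Action

variable {N : Network V T}

lemma T0_nonempty (A : N.T0) : A.1.Nonempty := by
  obtain ⟨A, h⟩ := A
  rcases h with ⟨t, rfl⟩ | ⟨t, rfl⟩ | ⟨v, rfl⟩
  · exact N.s_nonempty t
  · exact N.r_nonempty t
  · exact Set.singleton_nonempty v

lemma inter_self_ne {A : Set V} (h : A.Nonempty) : A ∩ A ≠ ∅ := by
  simpa using h.ne_empty

/-- The element `r(t)` of `T⁰`. -/
def rT (N : Network V T) (t : T) : N.T0 := ⟨N.r t, Or.inr (Or.inl ⟨t, rfl⟩)⟩

/-- The element `s(t)` of `T⁰`. -/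
def sT (N : Network V T) (t : T) : N.T0 := ⟨N.s t, Or.inl ⟨t, rfl⟩⟩

/-- A relation as a path symbol. -/
def symT (t : T) : PSym N := Sum.inl t

/-- An element of `T⁰` as a path symbol. -/
def symV (A : N.T0) : PSym N := Sum.inr A

lemma sym_cases (a : PSym N) : (∃ t, a = symT t) ∨ ∃ A, a = symV A := by
  rcases a with t | A
  · exact Or.inl ⟨t, rfl⟩
  · exact Or.inr ⟨A, rfl⟩

@[simp] lemma symT_inj {t u : T} : symT (N := N) t = symT u ↔ t = u := Sum.inl_injective.eq_iff
@[simp] lemma symT_ne_symV (t : T) (A : N.T0) : symT t ≠ symV A := Sum.inl_ne_inr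

open Classical in
/-- Left multiplication of a word `L` by `A ∈ T⁰`, where the empty word plays the role of zero.
The relation `R` says which pairs of distinct sets may be juxtaposed. -/
noncomputable def vact (R : Set V → Set V → Prop) (A : N.T0) (L : List (PSym N)) :
    List (PSym N) :=
  if A.1 = pathSrc N L then L else if R A.1 (pathSrc N L) then symV A :: L else []

/-- Left multiplication of a word by a relation `t`; a normal form is kept in which the symbol
after `t` has source `r(t)`. -/
noncomputable def pact (R : Set V → Set V → Prop) (t : T) (L : List (PSym N)) :
    List (PSym N) :=
  if vact R (rT N t) L = [] then [] else symT t :: vact R (rT N t) L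

open Classical in
/-- Left multiplication of a word by `t⁻¹`: it cancels an initial `t`, leaving a word with source
`r(t)`, and sends every other word to the empty one. -/
noncomputable def nact (R : Set V → Set V → Prop) (t : T) : List (PSym N) → List (PSym N)
  | Sum.inl u :: L => if t = u then vact R (rT N t) L else []
  | _ => []

/-- Left multiplication of a word by a generator. -/
noncomputable def act (R : Set V → Set V → Prop) : Gen N → Function.End (List (PSym N))
  | .pos t => pact R t
  | .neg t => nact R t
  | .ver A => vact R A
  | .zero => fun _ => []

variable {R : Set V → Set V → Prop}

@[simp] lemma pathSrc_nil : pathSrc N [] = ∅ := rfl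
@[simp] lemma pathSrc_cons (a : PSym N) (L) : pathSrc N (a :: L) = a.src := rfl
@[simp] lemma src_inl (t : T) : PSym.src (N := N) (symT t) = N.s t := rfl
@[simp] lemma src_inr (A : N.T0) : PSym.src (N := N) (symV A) = A.1 := rfl
@[simp] lemma rng_inl (t : T) : PSym.rng (N := N) (symT t) = N.r t := rfl
@[simp] lemma rng_inr (A : N.T0) : PSym.rng (N := N) (symV A) = A.1 := rfl
@[simp] lemma rT_val (t : T) : (rT N t).1 = N.r t := rfl
@[simp] lemma sT_val (t : T) : (sT N t).1 = N.s t := rfl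

open Classical in
lemma nact_cons (t u : T) (L : List (PSym N)) :
    nact R t (symT u :: L) = if t = u then vact R (rT N t) L else [] := rfl

lemma vact_src (A : N.T0) (L : List (PSym N)) :
    vact R A L = [] ∨ pathSrc N (vact R A L) = A.1 := by
  unfold vact
  split_ifs with h1 h2
  · exact Or.inr h1.symm
  · exact Or.inr rfl
  · exact Or.inl rfl

lemma vact_of_src {A : N.T0} {L : List (PSym N)} (h : A.1 = pathSrc N L) : vact R A L = L :=
  if_pos h

lemma vact_nil (hR : ∀ A B, R A B → (A ∩ B).Nonempty) (A : N.T0) : vact R A [] = [] := by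
  unfold vact
  split_ifs with h1 h2
  · rfl
  · have := hR _ _ h2
    simp at this
  · rfl

lemma vact_disj (hR : ∀ A B, R A B → (A ∩ B).Nonempty) (A : N.T0) (L : List (PSym N))
    (h : A.1 ∩ pathSrc N L = ∅) : vact R A L = [] := by
  unfold vact
  split_ifs with h1 h2
  · exact absurd (h1 ▸ h) (inter_self_ne (T0_nonempty A))
  · exact absurd h (hR _ _ h2).ne_empty
  · rfl

lemma vact_idem (hR : ∀ A B, R A B → (A ∩ B).Nonempty) (A : N.T0) (L : List (PSym N)) :
    vact R A (vact R A L) = vact R A L := by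
  rcases vact_src (R := R) A L with h | h
  · rw [h, vact_nil hR]
  · exact vact_of_src h.symm

lemma pact_src (t : T) (L : List (PSym N)) :
    pact R t L = [] ∨ pathSrc N (pact R t L) = N.s t := by
  unfold pact
  split_ifs with h1
  · exact Or.inl rfl
  · exact Or.inr rfl

lemma nact_src (t : T) (L : List (PSym N)) :
    nact R t L = [] ∨ pathSrc N (nact R t L) = N.r t := by
  rcases L with _ | ⟨u | A, L⟩
  · exact Or.inl rfl
  · change nact R t (symT u :: L) = [] ∨ pathSrc N (nact R t (symT u :: L)) = N.r t
    rw [nact_cons]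
    split_ifs with h
    · exact vact_src _ _
    · exact Or.inl rfl
  · exact Or.inl rfl

/-- `t⁻¹` annihilates every word whose source differs from `s(t)`. -/
lemma nact_of_src_ne {t : T} {L : List (PSym N)} (h : pathSrc N L ≠ N.s t) :
    nact R t L = [] := by
  rcases L with _ | ⟨u | A, L⟩
  · rfl
  · have : t ≠ u := by rintro rfl; exact h rfl
    exact if_neg this
  · rfl

lemma nact_ver_cons (t : T) (A : N.T0) (L) : nact R t (symV A :: L) = [] := rfl

lemma act_nil (hR : ∀ A B, R A B → (A ∩ B).Nonempty) (g : Gen N) : act R g [] = [] := by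
  cases g with
  | pos t => simp [act, pact, vact_nil hR]
  | neg t => rfl
  | ver A => exact vact_nil hR A
  | zero => rfl

lemma act_src (g : Gen N) (L : List (PSym N)) :
    act R g L = [] ∨ pathSrc N (act R g L) = g.srcSet := by
  cases g with
  | pos t => exact pact_src t L
  | neg t => exact nact_src t L
  | ver A => exact vact_src A L
  | zero => exact Or.inl rfl

lemma act_disj (hR : ∀ A B, R A B → (A ∩ B).Nonempty) (g : Gen N) (L : List (PSym N))
    (h : g.rngSet ∩ pathSrc N L = ∅) : act R g L = [] := by
  cases g with
  | pos t => simp [act, pact, vact_disj hR (rT N t) L h]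
  | neg t =>
    refine nact_of_src_ne fun hh => ?_
    rw [hh] at h
    exact inter_self_ne (N.s_nonempty t) h
  | ver A => exact vact_disj hR A L h
  | zero => rfl

lemma act_srcGen (hR : ∀ A B, R A B → (A ∩ B).Nonempty) (g : Gen N) (L : List (PSym N)) :
    act R g.srcGen (act R g L) = act R g L := by
  rcases act_src (R := R) g L with h | h
  · rw [h, act_nil hR]
  · cases g with
    | pos t => exact vact_of_src h.symm
    | neg t => exact vact_of_src h.symm
    | ver A => exact vact_of_src h.symm
    | zero => rfl

lemma act_rngGen (hR : ∀ A B, R A B → (A ∩ B).Nonempty) (g : Gen N) (L : List (PSym N)) :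
    act R g (act R g.rngGen L) = act R g L := by
  cases g with
  | pos t =>
    change pact R t (vact R (rT N t) L) = pact R t L
    simp only [pact, vact_idem hR]
  | neg t =>
    change nact R t (vact R (sT N t) L) = nact R t L
    by_cases h : N.s t = pathSrc N L
    · rw [vact_of_src h]
    · rw [nact_of_src_ne (Ne.symm h)]
      unfold vact
      split_ifs with h1 h2
      · exact absurd h1 h
      · rfl
      · rfl
  | ver A => exact vact_idem hR A L
  | zero => rfl

/-- The operators `act R g` satisfy the defining relations of `Q_Γ`. -/
lemma act_rel (hR : ∀ A B, R A B → (A ∩ B).Nonempty) {x y : FreeSemigroup (Gen N)}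
    (h : NRel N x y) : FreeSemigroup.lift (act R) x = FreeSemigroup.lift (act R) y := by
  cases h with
  | nr1l g hg =>
    simp only [map_mul, FreeSemigroup.lift_of]
    exact funext (act_srcGen hR g)
  | nr1r g hg =>
    simp only [map_mul, FreeSemigroup.lift_of]
    exact funext (act_rngGen hR g)
  | nr2 g₁ g₂ h₁ h₂ h =>
    simp only [map_mul, FreeSemigroup.lift_of]
    funext L
    change act R g₁ (act R g₂ L) = []
    rcases act_src (R := R) g₂ L with hh | hh
    · rw [hh, act_nil hR]
    · exact act_disj hR _ _ (by rw [hh, h])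
  | nr3 t₁ t₂ h =>
    simp only [map_mul, FreeSemigroup.lift_of]
    funext L
    change nact R t₁ (pact R t₂ L) = []
    unfold pact
    split_ifs
    · rfl
    · exact if_neg h
  | nr4 t =>
    simp only [map_mul, FreeSemigroup.lift_of]
    funext L
    change nact R t (pact R t L) = vact R (rT N t) L
    unfold pact
    split_ifs with h
    · exact h.symm
    · exact (if_pos rfl).trans (vact_idem hR _ _)
  | nr5 t A h =>
    simp only [map_mul, FreeSemigroup.lift_of]
    funext L
    change nact R t (vact R A L) = []
    rcases vact_src (R := R) A L with hh | hh
    · rw [hh]; rfl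
    · exact nact_of_src_ne (by rw [hh]; exact h)
  | nr6l x =>
    simp only [map_mul, FreeSemigroup.lift_of]
    rfl
  | nr6r x =>
    simp only [map_mul, FreeSemigroup.lift_of]
    funext L
    exact act_nil hR x

/-- The representation of `Q_Γ` induced by `act R`. -/
noncomputable def rep (R : Set V → Set V → Prop) (hR : ∀ A B, R A B → (A ∩ B).Nonempty) :
    QGamma N →ₙ* Function.End (List (PSym N)) where
  toFun q := Con.liftOn q (FreeSemigroup.lift (act R)) fun a b hab => by
    have hle : QCon N ≤ Con.ker (FreeSemigroup.lift (act R)) :=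
      Con.conGen_le.2 fun x y hxy => act_rel hR hxy
    exact hle hab
  map_mul' x y := by
    induction x using Con.induction_on
    induction y using Con.induction_on
    exact map_mul (FreeSemigroup.lift (act R)) _ _

end Action

/-! ### Words in `Q_Γ` and reduction of paths -/

section Words

variable {N : Network V T}

/-- The class of a generator, viewed in `Q_Γ` with a unit adjoined. -/
def cls (g : Gen N) : WithOne (QGamma N) := ((Qofw (of g) : QGamma N) : WithOne (QGamma N))

/-- The product of the classes of a list of generators; the unit adjoined to `Q_Γ` is the value
at the empty list. -/
def prodG (G : List (Gen N)) : WithOne (QGamma N) := (G.map cls).prod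

/-- The class of the word of a path, with value `1` at the empty list. -/
def pw (L : List (PSym N)) : WithOne (QGamma N) := prodG (L.map PSym.toGen)

/-- The class of the inverse of a path, with value `1` at the empty list. -/
def iw (L : List (PSym N)) : WithOne (QGamma N) := prodG (L.reverse.map PSym.toInvGen)

lemma Qofw_mul (x y : FreeSemigroup (Gen N)) : Qofw (x * y) = Qofw x * Qofw y := rfl

lemma Qofw_eq {x y : FreeSemigroup (Gen N)} (h : NRel N x y) : Qofw x = Qofw y :=
  (Con.eq _).2 (ConGen.Rel.of _ _ h)

lemma prodG_genWord (G : List (Gen N)) (h : G ≠ []) :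
    ((Qofw (genWord G) : QGamma N) : WithOne (QGamma N)) = prodG G := by
  induction G with
  | nil => exact absurd rfl h
  | cons a M ih =>
    cases M with
    | nil => simp [prodG, cls, genWord]; rfl
    | cons b M =>
      have e : (genWord (a :: b :: M) : FreeSemigroup (Gen N)) = of a * genWord (b :: M) := rfl
      rw [e, Qofw_mul, WithOne.coe_mul, ih (by simp)]
      simp [prodG, cls]

lemma word_eq {L : List (PSym N)} (h : L ≠ []) :
    ((Qofw (word L) : QGamma N) : WithOne (QGamma N)) = pw L :=
  prodG_genWord _ (by simpa using h)

lemma invWord_eq {L : List (PSym N)} (h : L ≠ []) :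
    ((Qofw (invWord L) : QGamma N) : WithOne (QGamma N)) = iw L :=
  prodG_genWord _ (by simpa using h)

lemma Qrnf_eq {α β : List (PSym N)} (hα : α ≠ []) (hβ : β ≠ []) :
    ((Qrnf N α β : QGamma N) : WithOne (QGamma N)) = pw α * iw β := by
  rw [Qrnf, Qofw_mul, WithOne.coe_mul, word_eq hα, invWord_eq hβ]

@[simp] lemma pw_nil : pw ([] : List (PSym N)) = 1 := rfl
@[simp] lemma pw_cons (a : PSym N) (L) : pw (a :: L) = cls a.toGen * pw L := by
  simp [pw, prodG]
@[simp] lemma iw_nil : iw ([] : List (PSym N)) = 1 := rfl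
@[simp] lemma iw_cons (a : PSym N) (L) : iw (a :: L) = iw L * cls a.toInvGen := by
  simp [iw, prodG]
lemma pw_append (L M : List (PSym N)) : pw (L ++ M) = pw L * pw M := by
  simp [pw, prodG]
lemma iw_append (L M : List (PSym N)) : iw (L ++ M) = iw M * iw L := by
  simp [iw, prodG]

lemma cls_rel₁ {a b c : Gen N} (h : NRel N (of a * of b) (of c)) : cls a * cls b = cls c := by
  rw [cls, cls, ← WithOne.coe_mul, ← Qofw_mul, Qofw_eq h]; rfl

lemma toGen_ne_zero (a : PSym N) : a.toGen ≠ Gen.zero := by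
  rcases a with t | A <;> exact fun h => by cases h

lemma toInvGen_ne_zero (a : PSym N) : a.toInvGen ≠ Gen.zero := by
  rcases a with t | A <;> exact fun h => by cases h

lemma srcGen_toGen (a : PSym N) (A : N.T0) (h : A.1 = a.src) : a.toGen.srcGen = .ver A := by
  rcases a with t | B <;> exact congrArg Gen.ver (Subtype.ext h.symm)

lemma rngGen_toInvGen (a : PSym N) (A : N.T0) (h : A.1 = a.src) :
    a.toInvGen.rngGen = .ver A := by
  rcases a with t | B <;> exact congrArg Gen.ver (Subtype.ext h.symm)

lemma rngGen_toGen (a : PSym N) (A : N.T0) (h : A.1 = a.rng) : a.toGen.rngGen = .ver A := by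
  rcases a with t | B <;> exact congrArg Gen.ver (Subtype.ext h.symm)

lemma srcGen_toInvGen (a : PSym N) (A : N.T0) (h : A.1 = a.rng) :
    a.toInvGen.srcGen = .ver A := by
  rcases a with t | B <;> exact congrArg Gen.ver (Subtype.ext h.symm)

lemma ver_mul_toGen (a : PSym N) (A : N.T0) (h : A.1 = a.src) :
    cls (.ver A) * cls a.toGen = cls a.toGen := by
  rw [← srcGen_toGen a A h]; exact cls_rel₁ (.nr1l _ (toGen_ne_zero a))

lemma toGen_mul_ver (a : PSym N) (A : N.T0) (h : A.1 = a.rng) :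
    cls a.toGen * cls (.ver A) = cls a.toGen := by
  rw [← rngGen_toGen a A h]; exact cls_rel₁ (.nr1r _ (toGen_ne_zero a))

lemma toInvGen_mul_ver (a : PSym N) (A : N.T0) (h : A.1 = a.src) :
    cls a.toInvGen * cls (.ver A) = cls a.toInvGen := by
  rw [← rngGen_toInvGen a A h]; exact cls_rel₁ (.nr1r _ (toInvGen_ne_zero a))

lemma ver_mul_toInvGen (a : PSym N) (A : N.T0) (h : A.1 = a.rng) :
    cls (.ver A) * cls a.toInvGen = cls a.toInvGen := by
  rw [← srcGen_toInvGen a A h]; exact cls_rel₁ (.nr1l _ (toInvGen_ne_zero a))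

lemma isChain_iff_getElem? {α : Type*} {P : α → α → Prop} (L : List α) :
    (∀ (i : ℕ) (a b : α), L[i]? = some a → L[i + 1]? = some b → P a b) ↔ L.IsChain P := by
  induction L with
  | nil => simp
  | cons x L ih =>
    cases L with
    | nil => simp
    | cons y L =>
      rw [List.isChain_cons_cons, ← ih]
      constructor
      · intro h
        exact ⟨h 0 x y rfl rfl, fun i a b ha hb => h (i + 1) a b (by simpa using ha)
          (by simpa using hb)⟩
      · rintro ⟨h0, h⟩ i a b ha hb
        cases i with
        | zero => simp at ha hb; subst ha hb; exact h0
        | succ i => exact h i a b (by simpa using ha) (by simpa using hb)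

lemma isPath_iff (L : List (PSym N)) :
    IsPath N L ↔ L ≠ [] ∧ L.IsChain fun a b => (a.rng ∩ b.src).Nonempty := by
  rw [IsPath, isChain_iff_getElem?]

lemma isLinear_iff (L : List (PSym N)) :
    IsLinear N L ↔ L.IsChain fun a b => a.rng = b.src := by
  rw [IsLinear, isChain_iff_getElem?]

/-- One elementary reduction: deleting a vertex set which is the source of the next symbol or the
range of the previous one. -/
inductive Step : List (PSym N) → List (PSym N) → Prop
  | src (p q : List (PSym N)) (A : N.T0) (b : PSym N) (h : A.1 = b.src) :
      Step (p ++ symV A :: b :: q) (p ++ b :: q)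
  | rng (p q : List (PSym N)) (A : N.T0) (b : PSym N) (h : A.1 = b.rng) :
      Step (p ++ b :: symV A :: q) (p ++ b :: q)

lemma Step.length {L M : List (PSym N)} (h : Step L M) : M.length < L.length := by
  cases h <;> simp

lemma Step.ne_nil {L M : List (PSym N)} (h : Step L M) : M ≠ [] := by
  cases h <;> simp

lemma Step.chain {L M : List (PSym N)} (h : Step L M) {P : Set V → Set V → Prop}
    (hL : L.IsChain fun a b => P a.rng b.src) : M.IsChain fun a b => P a.rng b.src := by
  cases h with
  | src p q A b h =>
    rw [List.isChain_append] at hL ⊢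
    obtain ⟨h1, h2, h3⟩ := hL
    refine ⟨h1, h2.tail, fun x hx y hy => ?_⟩
    have := h3 x hx (symV A) (by simp)
    simp at hy
    subst hy
    simpa [h] using this
  | rng p q A b h =>
    rw [List.isChain_append] at hL ⊢
    obtain ⟨h1, h2, h3⟩ := hL
    refine ⟨h1, ?_, fun x hx y hy => h3 x hx y (by simpa using hy)⟩
    rw [List.isChain_cons_cons] at h2
    cases q with
    | nil => simp
    | cons c q =>
      have := h2.2
      rw [List.isChain_cons_cons] at this ⊢
      refine ⟨?_, this.2⟩
      simpa [h] using this.1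

lemma Step.pw {L M : List (PSym N)} (h : Step L M) : pw M = pw L := by
  cases h with
  | src p q A b h =>
    simp only [pw_append, pw_cons]
    rw [← mul_assoc (cls (PSym.toGen (symV A))) _ (NetworkSemigroup.pw q)]
    congr 2
    exact (ver_mul_toGen b A h).symm
  | rng p q A b h =>
    simp only [pw_append, pw_cons]
    rw [← mul_assoc (cls b.toGen) _ (NetworkSemigroup.pw q)]
    congr 2
    exact (toGen_mul_ver b A h).symm

lemma Step.iw {L M : List (PSym N)} (h : Step L M) : iw M = iw L := by
  cases h with
  | src p q A b h =>
    simp only [iw_append, iw_cons, mul_assoc]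
    congr 1
    rw [← mul_assoc (cls b.toInvGen)]
    congr 1
    exact (toInvGen_mul_ver b A h).symm
  | rng p q A b h =>
    simp only [iw_append, iw_cons, mul_assoc]
    congr 1
    rw [← mul_assoc _ (cls b.toInvGen)]
    congr 1
    exact (ver_mul_toInvGen b A h).symm

lemma Step.pathRng {L M : List (PSym N)} (h : Step L M) : pathRng N M = pathRng N L := by
  cases h with
  | src p q A b h => simp [NetworkSemigroup.pathRng]
  | rng p q A b h =>
    cases q with
    | nil => simp [NetworkSemigroup.pathRng, h]
    | cons c q => simp [NetworkSemigroup.pathRng]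

lemma Step.mem {L M : List (PSym N)} (h : Step L M) (t : T) (ht : symT t ∈ L) :
    symT t ∈ M := by
  cases h <;> simpa using ht

lemma isVerOf_iff (a : PSym N) (B : Set V) : a.IsVerOf B ↔ ∃ A : N.T0, a = symV A ∧ A.1 = B := by
  constructor
  · intro h
    rcases a with t | A
    · exact h.elim
    · exact ⟨A, rfl, h⟩
  · rintro ⟨A, rfl, h⟩
    exact h

lemma split_two {α : Type*} {L : List α} {i : ℕ} {a b : α} (ha : L[i]? = some a)
    (hb : L[i + 1]? = some b) : ∃ p q, L = p ++ a :: b :: q := by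
  refine ⟨L.take i, L.drop (i + 2), ?_⟩
  obtain ⟨h1, rfl⟩ := List.getElem?_eq_some_iff.1 ha
  obtain ⟨h2, rfl⟩ := List.getElem?_eq_some_iff.1 hb
  rw [← List.drop_eq_getElem_cons, ← List.drop_eq_getElem_cons, List.take_append_drop]

lemma exists_step {L : List (PSym N)} (h : ¬ IsReducedPath N L) : ∃ M, Step L M := by
  have key₁ : ∀ (i : ℕ) (a b : PSym N), L[i]? = some a → L[i + 1]? = some b →
      a.IsVerOf b.src → ∃ M, Step L M := by
    intro i a b ha hb hab
    obtain ⟨A, rfl, hA⟩ := (isVerOf_iff _ _).1 hab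
    obtain ⟨p, q, rfl⟩ := split_two ha hb
    exact ⟨_, .src p q A b hA⟩
  have key₂ : ∀ (i : ℕ) (a b : PSym N), L[i]? = some a → L[i + 1]? = some b →
      b.IsVerOf a.rng → ∃ M, Step L M := by
    intro i a b ha hb hab
    obtain ⟨A, rfl, hA⟩ := (isVerOf_iff _ _).1 hab
    obtain ⟨p, q, rfl⟩ := split_two ha hb
    exact ⟨_, .rng p q A a hA⟩
  by_contra hc
  refine h ⟨fun i a b ha hb _ hab => hc (key₁ i a b ha hb hab), fun i a b c ha hb hcc =>
    ⟨fun hab => hc (key₁ i a b ha hb hab), fun hab => hc (key₂ (i + 1) b c hb hcc hab)⟩⟩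

/-- Every path can be replaced by a reduced one without changing its class, the class of its
inverse, its range, its linearity or the relations occurring in it. -/
lemma exists_reduced (L : List (PSym N)) (hL : IsPath N L) :
    ∃ M, IsPath N M ∧ IsReducedPath N M ∧ (IsLinear N L → IsLinear N M) ∧ pw M = pw L ∧
      iw M = iw L ∧ pathRng N M = pathRng N L ∧ ∀ t : T, symT t ∈ L → symT t ∈ M := by
  induction hn : L.length using Nat.strong_induction_on generalizing L with
  | _ n ih =>
    by_cases hr : IsReducedPath N L
    · exact ⟨L, hL, hr, id, rfl, rfl, rfl, fun _ => id⟩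
    · obtain ⟨K, hK⟩ := exists_step hr
      have hKp : IsPath N K := by
        rw [isPath_iff] at hL ⊢
        exact ⟨hK.ne_nil, hK.chain (P := fun A B => (A ∩ B).Nonempty) hL.2⟩
      obtain ⟨M, h1, h2, h3, h4, h5, h6, h7⟩ := ih K.length (hn ▸ hK.length) K hKp rfl
      refine ⟨M, h1, h2, fun hl => h3 ?_, h4.trans hK.pw, h5.trans hK.iw, h6.trans hK.pathRng,
        fun t ht => h7 t (hK.mem t ht)⟩
      rw [isLinear_iff] at hl ⊢
      exact hK.chain (P := fun A B => A = B) hl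

end Words

/-! ### `S_Γ` is a left ideal of `Q_Γ` -/

section Ideal

variable {N : Network V T}

/-- The elements of `Q_Γ` that are zero or of the form `αβ⁻¹` with `β` linear, containing at least
one relation, and `r(α) = r(β)`; the paths need not be reduced. -/
def InS (x : QGamma N) : Prop :=
  x = Qzero N ∨ ∃ α β : List (PSym N), IsPath N α ∧ IsPath N β ∧ IsLinear N β ∧
    (∃ t : T, symT t ∈ β) ∧ pathRng N α = pathRng N β ∧
    (x : WithOne (QGamma N)) = pw α * iw β

/-- A reduced linear path outside `T⁰` contains a relation: otherwise its last two symbols would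
be equal elements of `T⁰`. -/
lemma exists_mem_of_not_T0 {β : List (PSym N)} (hβ : β ∈ RLP N) (h : ¬ InT0Path N β) :
    ∃ t : T, symT t ∈ β := by
  obtain ⟨hp, hl, hr⟩ := hβ
  by_contra hc
  push Not at hc
  have hver : ∀ x ∈ β, ∃ A : N.T0, x = symV A := by
    intro x hx
    rcases sym_cases x with ⟨t, rfl⟩ | ⟨A, rfl⟩
    · exact absurd hx (hc t)
    · exact ⟨A, rfl⟩
  rcases β.eq_nil_or_concat with rfl | ⟨γ, b, rfl⟩
  · exact hp.1 rfl
  rcases γ.eq_nil_or_concat with rfl | ⟨γ, a, rfl⟩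
  · obtain ⟨A, rfl⟩ := hver b (by simp)
    exact h ⟨A, rfl⟩
  · obtain ⟨A, rfl⟩ := hver a (by simp)
    have ha : ((γ.concat (symV A)).concat b)[γ.length]? = some (symV A) := by simp
    have hb : ((γ.concat (symV A)).concat b)[γ.length + 1]? = some b := by simp
    exact hr.1 γ.length (symV A) b ha hb (by simp) (hl _ _ _ ha hb)

lemma mem_Sset_iff (x : QGamma N) : x ∈ Sset N ↔ InS x := by
  constructor
  · rintro (⟨α, β, hα, hβ, hT, hr, rfl⟩ | hx)
    · exact Or.inr ⟨α, β, hα.1, hβ.1, hβ.2.1, exists_mem_of_not_T0 hβ hT, hr,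
        Qrnf_eq hα.1.1 hβ.1.1⟩
    · exact Or.inl hx
  · rintro (hx | ⟨α, β, hα, hβ, hl, ⟨t, ht⟩, hr, hx⟩)
    · exact Or.inr hx
    · obtain ⟨α', a1, a2, -, a4, -, a6, -⟩ := exists_reduced α hα
      obtain ⟨β', b1, b2, b3, -, b5, b6, b7⟩ := exists_reduced β hβ
      refine Or.inl ⟨α', β', ⟨a1, a2⟩, ⟨b1, b3 hl, b2⟩, ?_, by rw [a6, b6, hr], ?_⟩
      · rintro ⟨A, rfl⟩
        have := b7 t ht
        exact symT_ne_symV t A (List.mem_singleton.1 this)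
      · apply WithOne.coe_injective
        rw [hx, Qrnf_eq a1.1 b1.1, a4, b5]

lemma zero_mul_Q (x : QGamma N) : Qzero N * x = Qzero N := by
  induction x using Con.induction_on with
  | _ w =>
    induction w using FreeSemigroup.recOnMul with
    | ih1 g => exact Qofw_eq (.nr6l g)
    | ih2 g w ih1 ih2 =>
      have e : ((of g * w : FreeSemigroup (Gen N)) : QGamma N) = (of g : QGamma N) * w := rfl
      rw [e, ← mul_assoc, ih1, ih2]

lemma gen_mul_zero (g : Gen N) : Qofw (of g) * Qzero N = Qzero N := Qofw_eq (.nr6r g)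

lemma eq_zero_of_cls {x : QGamma N} {y : WithOne (QGamma N)}
    (h : (x : WithOne (QGamma N)) = cls .zero * y) : x = Qzero N := by
  apply WithOne.coe_injective
  rw [h]
  induction y using WithOne.recOneCoe with
  | one => rw [mul_one]; rfl
  | coe y =>
    change ((Qzero N : QGamma N) : WithOne (QGamma N)) * y = _
    rw [← WithOne.coe_mul, zero_mul_Q]

lemma inS_cons_mul {x : QGamma N} (a : PSym N) {α β : List (PSym N)} (hα : IsPath N α)
    (hβ : IsPath N β) (hl : IsLinear N β) (ht : ∃ t : T, symT t ∈ β)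
    (hr : pathRng N α = pathRng N β)
    (hx : (x : WithOne (QGamma N)) = cls a.toGen * (pw α * iw β)) : InS x := by
  obtain ⟨b, α, rfl⟩ := List.exists_cons_of_ne_nil hα.1
  by_cases h : a.rng ∩ b.src = ∅
  · left
    refine eq_zero_of_cls (y := pw α * iw β) ?_
    have e : cls a.toGen * cls b.toGen = cls .zero :=
      cls_rel₁ (.nr2 _ _ (toGen_ne_zero a) (toGen_ne_zero b) (by
        rcases a with t | A <;> rcases b with u | B <;> exact h))
    rw [hx, pw_cons, mul_assoc, ← mul_assoc, e]
  · right
    refine ⟨a :: b :: α, β, ?_, hβ, hl, ht, ?_, by rw [hx, pw_cons a, mul_assoc]⟩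
    · rw [isPath_iff] at hα ⊢
      exact ⟨by simp, List.isChain_cons_cons.2 ⟨Set.nonempty_iff_ne_empty.2 h, hα.2⟩⟩
    · rw [← hr]; simp [pathRng]

lemma isPath_tail {a b : PSym N} {α : List (PSym N)} (h : IsPath N (a :: b :: α)) :
    IsPath N (b :: α) := by
  rw [isPath_iff] at h ⊢
  exact ⟨by simp, (List.isChain_cons_cons.1 h.2).2⟩

/-- Multiplying `αβ⁻¹` on the left by `t⁻¹` either cancels against the first relation of `α`, gives
zero, or, when `α` is exhausted, lengthens `β` by `t`. -/
lemma inS_neg_mul (t : T) (α : List (PSym N)) : ∀ {x : QGamma N} {β : List (PSym N)},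
    IsPath N α → IsPath N β → IsLinear N β → (∃ t : T, symT t ∈ β) →
    pathRng N α = pathRng N β →
    (x : WithOne (QGamma N)) = cls (.neg t) * (pw α * iw β) → InS x := by
  induction α with
  | nil => exact fun h => absurd rfl h.1
  | cons a α ih =>
    intro x β hα hβ hl ht hr hx
    rcases sym_cases a with ⟨u, rfl⟩ | ⟨A, rfl⟩
    · by_cases hu : t = u
      · subst hu
        have e : cls (.neg t) * cls (.pos t) = cls (.ver (rT N t)) := cls_rel₁ (.nr4 t)
        have hx' : (x : WithOne (QGamma N)) = cls (.ver (rT N t)) * (pw α * iw β) := by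
          rw [hx, pw_cons, mul_assoc, ← mul_assoc, ← e]; rfl
        cases α with
        | nil =>
          refine Or.inr ⟨[symV (rT N t)], β, ?_, hβ, hl, ht, hr, ?_⟩
          · rw [isPath_iff]; simp
          · rw [hx', pw_cons, pw_nil, mul_one, one_mul]; rfl
        | cons b α =>
          exact inS_cons_mul (symV (rT N t)) (isPath_tail hα) hβ hl ht
            (by rw [← hr]; simp [pathRng]) hx'
      · left
        refine eq_zero_of_cls (y := pw α * iw β) ?_
        have e : cls (.neg t) * cls (.pos u) = cls (N := N) .zero := cls_rel₁ (.nr3 t u hu)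
        rw [hx, pw_cons, mul_assoc, ← mul_assoc, ← e]; rfl
    · by_cases hA : A.1 = N.s t
      · have e : cls (.neg t) * cls (.ver A) = cls (.neg t) := toInvGen_mul_ver (symT t) A hA
        have hx' : (x : WithOne (QGamma N)) = cls (.neg t) * (pw α * iw β) := by
          rw [hx, pw_cons, mul_assoc, ← mul_assoc]
          exact congrArg (· * _) e
        cases α with
        | nil =>
          have hr' : pathRng N β = N.s t := by rw [← hr, ← hA]; rfl
          -- `t⁻¹β⁻¹ = r(t)(βt)⁻¹`, and `βt` is linear because `r(β) = A = s(t)`.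
          refine Or.inr ⟨[symV (rT N t)], β ++ [symT t], ?_, ?_, ?_, ⟨t, by simp⟩, ?_, ?_⟩
          · rw [isPath_iff]; simp
          · rw [isPath_iff] at hβ ⊢
            refine ⟨by simp, List.isChain_append.2 ⟨hβ.2, by simp, ?_⟩⟩
            intro y hy z hz
            simp at hz hy
            subst hz
            have : y.rng = N.s t := by rw [← hr']; simp [pathRng, hy]
            rw [this]
            simpa using N.s_nonempty t
          · rw [isLinear_iff] at hl ⊢
            refine List.isChain_append.2 ⟨hl, by simp, ?_⟩
            intro y hy z hz
            simp at hz hy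
            subst hz
            rw [src_inl, ← hr']; simp [pathRng, hy]
          · simp [pathRng]
          · have e' : cls (.ver (rT N t)) * cls (.neg t) = cls (.neg t) :=
              ver_mul_toInvGen (symT t) (rT N t) rfl
            rw [hx', iw_append]
            simp only [pw_nil, pw_cons, iw_cons, iw_nil, one_mul, mul_one]
            rw [← mul_assoc]
            exact congrArg (· * _) e'.symm
        | cons b α =>
          exact ih (isPath_tail hα) hβ hl ht (by rw [← hr]; simp [pathRng]) hx'
      · left
        refine eq_zero_of_cls (y := pw α * iw β) ?_
        have e : cls (.neg t) * cls (.ver A) = cls .zero := cls_rel₁ (.nr5 t A hA)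
        rw [hx, pw_cons, mul_assoc, ← mul_assoc, ← e]; rfl

lemma inS_gen_mul (g : Gen N) {x : QGamma N} (hx : InS x) : InS (Qofw (of g) * x) := by
  rcases hx with rfl | ⟨α, β, hα, hβ, hl, ht, hr, hx⟩
  · exact Or.inl (gen_mul_zero g)
  · have hx' : ((Qofw (of g) * x : QGamma N) : WithOne (QGamma N)) = cls g * (pw α * iw β) := by
      rw [WithOne.coe_mul, hx]; rfl
    cases g with
    | pos t => exact inS_cons_mul (symT t) hα hβ hl ht hr hx'
    | neg t => exact inS_neg_mul t α hα hβ hl ht hr hx'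
    | ver A => exact inS_cons_mul (symV A) hα hβ hl ht hr hx'
    | zero => exact Or.inl (zero_mul_Q x)

lemma inS_mul (q : QGamma N) : ∀ {x : QGamma N}, InS x → InS (q * x) := by
  induction q using Con.induction_on with
  | _ w =>
    induction w using FreeSemigroup.recOnMul with
    | ih1 g => exact inS_gen_mul g
    | ih2 g w ih1 ih2 =>
      intro x hx
      have e : ((of g * w : FreeSemigroup (Gen N)) : QGamma N) = (of g : QGamma N) * w := rfl
      rw [e, mul_assoc]
      exact ih1 (ih2 hx)

/-- `S_Γ` as a subsemigroup of `Q_Γ`. -/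
def SSub (N : Network V T) : Subsemigroup (QGamma N) where
  carrier := Sset N
  mul_mem' {a b} _ hb := (mem_Sset_iff _).2 (inS_mul a ((mem_Sset_iff b).1 hb))

end Ideal

/-! ### The kernel congruence -/

section Main

variable {N : Network V T}

lemma rep_of (R : Set V → Set V → Prop) (hR : ∀ A B, R A B → (A ∩ B).Nonempty) (g : Gen N) :
    rep R hR (Qofw (of g)) = act R g := rfl

/-- The element `tt⁻¹` of `Q_Γ`. -/
def idem (N : Network V T) (t : T) : QGamma N := Qofw (of (.pos t)) * Qofw (of (.neg t))

/-- The element `vtt⁻¹` of `Q_Γ`, for a vertex `v`. -/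
def videm (N : Network V T) (t : T) (v : V) : QGamma N :=
  Qofw (of (.ver ⟨{v}, Or.inr (Or.inr ⟨v, rfl⟩)⟩)) * idem N t

lemma inS_idem (t : T) : InS (idem N t) := by
  refine Or.inr ⟨[symT t], [symT t], ?_, ?_, ?_, ⟨t, by simp⟩, rfl, ?_⟩
  · rw [isPath_iff]; simp
  · rw [isPath_iff]; simp
  · rw [isLinear_iff]; simp
  · simp [idem]; rfl

lemma inS_videm (t : T) (v : V) : InS (videm N t v) := inS_mul _ (inS_idem t)

/-- `vtt⁻¹ ≠ 0` when `v ∈ s(t)`: it acts nontrivially on the word `t r(t)` when any two overlapping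
sets may be juxtaposed. -/
lemma videm_ne_zero (t : T) (v : V) (hv : v ∈ N.s t) (hne : {v} ≠ N.s t) :
    videm N t v ≠ Qzero N := by
  intro h
  have hh := congrFun (congrArg (rep (fun A B => (A ∩ B).Nonempty) fun _ _ => id) h)
    [symT t, symV (rT N t)]
  rw [videm, idem, map_mul, map_mul, rep_of, rep_of, rep_of] at hh
  change vact (fun A B => (A ∩ B).Nonempty) ⟨{v}, Or.inr (Or.inr ⟨v, rfl⟩)⟩
    (pact (fun A B => (A ∩ B).Nonempty) t
      (nact (fun A B => (A ∩ B).Nonempty) t [symT t, symV (rT N t)])) = [] at hh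
  simp [vact, pact, nact_cons, hne, hv] at hh

/-- The representation in which no two distinct sets may be juxtaposed, so that every non-linear
path acts as zero: the action of the inverse semigroup of the directed graph with vertex set `T⁰`
and edge set `T` on words. -/
noncomputable def linRep (N : Network V T) : QGamma N →ₙ* Function.End (List (PSym N)) :=
  rep (fun _ _ => False) fun _ _ => False.elim

lemma linRep_zero (L : List (PSym N)) : linRep N (Qzero N) L = [] := rfl

lemma linRep_videm (t : T) (v : V) (hne : {v} ≠ N.s t) :
    linRep N (videm N t v) = linRep N (Qzero N) := by
  funext L
  rw [linRep_zero, linRep, videm, idem, map_mul, map_mul, rep_of, rep_of, rep_of]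
  change vact (fun _ _ => False) ⟨{v}, Or.inr (Or.inr ⟨v, rfl⟩)⟩
    (pact (fun _ _ => False) t (nact (fun _ _ => False) t L)) = []
  rcases pact_src (R := fun _ _ => False) (N := N) t (nact (fun _ _ => False) t L) with h | h
  · rw [h]; exact vact_nil (fun _ _ => False.elim) _
  · simp [vact, h, hne]

lemma linRep_idem_ne (t : T) : linRep N (idem N t) ≠ linRep N (Qzero N) := by
  intro h
  have hh := congrFun h [symT t, symV (rT N t)]
  rw [linRep_zero, linRep, idem, map_mul, rep_of, rep_of] at hh
  change pact (fun _ _ => False) t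
    (nact (fun _ _ => False) t [symT t, symV (rT N t)]) = [] at hh
  simp [vact, pact, nact_cons] at hh

end Main

/-- if some relation `t` of the network `Γ` has `|s(t)| > 1`, then `Q_Γ` and
`S_Γ` are not congruence-free: each admits a semigroup congruence which is neither the
identity congruence nor the universal congruence. -/
theorem not_congruence_free (N : Network V T)
    (h : ∃ t : T, ∃ v w : V, v ∈ N.s t ∧ w ∈ N.s t ∧ v ≠ w) :
    (∃ c : Con (QGamma N), (∃ a b : QGamma N, c a b ∧ a ≠ b) ∧ ∃ a b : QGamma N, ¬ c a b) ∧
    (∃ Ssub : Subsemigroup (QGamma N), (Ssub : Set (QGamma N)) = Sset N ∧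
      ∃ c : Con Ssub, (∃ a b : Ssub, c a b ∧ a ≠ b) ∧ ∃ a b : Ssub, ¬ c a b) := by
  obtain ⟨t, v, w, hv, hw, hvw⟩ := h
  have hne : {v} ≠ N.s t := fun h => hvw (h ▸ hw : w ∈ ({v} : Set V)).symm
  refine ⟨⟨Con.ker (linRep N), ⟨_, _, linRep_videm t v hne, videm_ne_zero t v hv hne⟩,
    _, _, linRep_idem_ne t⟩, SSub N, rfl,
    Con.ker ((linRep N).comp (MulMemClass.subtype (SSub N))), ?_, ?_⟩
  · exact ⟨⟨_, (mem_Sset_iff _).2 (inS_videm t v)⟩, ⟨_, (mem_Sset_iff _).2 (Or.inl rfl)⟩,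
      linRep_videm t v hne, fun h => videm_ne_zero t v hv hne (congrArg Subtype.val h)⟩
  · exact ⟨⟨_, (mem_Sset_iff _).2 (inS_idem t)⟩, ⟨_, (mem_Sset_iff _).2 (Or.inl rfl)⟩,
      linRep_idem_ne t⟩

end NetworkSemigroup
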